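/- For all u, v ∈ 𝒰_Ω one has ‖u_x‖₁ · ‖v_y‖₁ ≤ 4 ‖u_y‖₁ · ‖v_x‖₁. In particular, the ratio between the supremum and the infimum of ‖u_x‖₁/‖u_y‖₁ over nonzero u ∈ 𝒰_Ω is at most 4. -/

import Mathlib

open Set MeasureTheory
open scoped ENNReal

/-- Partial derivative of `u` in the `x` direction (junk value where `u` is not
differentiable). -/
noncomputable def ux (u : ℝ × ℝ → ℝ) (z : ℝ × ℝ) : ℝ := fderiv ℝ u z (1, 0)

/-- Partial derivative of `u` in the `y` direction. -/
noncomputable def uy (u : ℝ × ℝ → ℝ) (z : ℝ × ℝ) : ℝ := fderiv ℝ u z (0, 1)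

/-- Directional derivative of `u` in the direction `h`. -/
noncomputable def uh (h : ℝ × ℝ) (u : ℝ × ℝ → ℝ) (z : ℝ × ℝ) : ℝ := fderiv ℝ u z h

/-- The class `𝒰_Ω`: continuous concave functions on `Ω` vanishing on the boundary,
with uniformly bounded gradient over all interior points where it exists. -/
def MemU (Ω : Set (ℝ × ℝ)) (u : ℝ × ℝ → ℝ) : Prop :=
  ContinuousOn u Ω ∧ ConcaveOn ℝ Ω u ∧ (∀ z ∈ frontier Ω, u z = 0) ∧
    ∃ C : ℝ, ∀ z ∈ interior Ω, ∀ g : (ℝ × ℝ) →L[ℝ] ℝ, HasFDerivAt u g z → ‖g‖ ≤ C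

/-- The `L¹` norm of `f` over `Ω`. -/
noncomputable def L1N (Ω : Set (ℝ × ℝ)) (f : ℝ × ℝ → ℝ) : ℝ := ∫ z in Ω, |f z|

/-- The `L^p` norm of `f` over `Ω`, `p ∈ [1, ∞)`. -/
noncomputable def LpN (Ω : Set (ℝ × ℝ)) (p : ℝ) (f : ℝ × ℝ → ℝ) : ℝ :=
  (∫ z in Ω, |f z| ^ p) ^ (1 / p)

/-- The `L^∞` norm (essential supremum) of `f` over `Ω`. -/
noncomputable def LinfN (Ω : Set (ℝ × ℝ)) (f : ℝ × ℝ → ℝ) : ℝ≥0∞ :=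
  essSup (fun z => ENNReal.ofReal |f z|) (volume.restrict Ω)

/-- The width of `Ω` parallel to the (Euclidean unit) vector `h`: the distance between the
two lines of support of `Ω` parallel to `h`, i.e. the oscillation over `Ω` of the linear
functional given by the unit normal `(-h.2, h.1)` to `h`. -/
noncomputable def widthPar (Ω : Set (ℝ × ℝ)) (h : ℝ × ℝ) : ℝ :=
  sSup ((fun z : ℝ × ℝ => -h.2 * z.1 + h.1 * z.2) '' Ω) -
    sInf ((fun z : ℝ × ℝ => -h.2 * z.1 + h.1 * z.2) '' Ω)

/-!
On each vertical section of `Ω` the function `u` is concave and vanishes at both ends, so it rises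
to its maximum and falls back to `0`: the integral of `|u_y|` along the section is exactly twice the
maximum of `u` there. Hence `‖u_y‖₁` is twice the integral, over the projection of `Ω` to the
`x`-axis, of the section-wise maximum. That maximum is itself a nonnegative concave function with
largest value `M = max u`, so if `w` is the length of the projection, its integral lies between
`M w / 2` (area of a triangle) and `M w` (area of a rectangle), and `M w ≤ ‖u_y‖₁ ≤ 2 M w`.
Symmetrically `M h ≤ ‖u_x‖₁ ≤ 2 M h` with `h` the height of `Ω`. In the product inequality `M`, `w`
and `h` cancel, leaving the constant `2 · 2 = 4`.
-/

section ConvexSet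

variable {E : Type*} [NormedAddCommGroup E] [NormedSpace ℝ E] [FiniteDimensional ℝ E]
  [MeasurableSpace E] [BorelSpace E] {μ : Measure E} [μ.IsAddHaarMeasure] {s : Set E} {f : E → ℝ}

lemma ae_restrict_differentiableAt_of_locallyLipschitzOn (hs : IsOpen s)
    (hf : LocallyLipschitzOn s f) : ∀ᵐ z ∂μ.restrict s, DifferentiableAt ℝ f z := by
  rw [ae_restrict_iff' hs.measurableSet, ae_iff]
  refine measure_null_of_locally_null _ fun z hz => ?_
  simp only [Classical.not_imp, mem_ofPred_eq] at hz
  obtain ⟨K, t, ht, hK⟩ := hf hz.1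
  rw [hs.nhdsWithin_eq hz.1] at ht
  have hdiff := (hK.mono interior_subset).ae_differentiableWithinAt_of_mem (μ := μ)
  rw [ae_iff] at hdiff
  refine ⟨_, Filter.inter_mem self_mem_nhdsWithin
    (mem_nhdsWithin_of_mem_nhds (interior_mem_nhds.2 ht)), measure_mono_null ?_ hdiff⟩
  rintro w ⟨hw, hwt⟩ hdw
  exact hw fun _ => (hdw hwt).differentiableAt (isOpen_interior.mem_nhds hwt)

lemma ae_restrict_differentiableAt_of_concaveOn (hf : ConcaveOn ℝ s f) :
    ∀ᵐ z ∂μ.restrict s, DifferentiableAt ℝ f z := by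
  rw [← Measure.restrict_congr_set (interior_ae_eq_of_null_frontier (hf.1.addHaar_frontier μ))]
  exact ae_restrict_differentiableAt_of_locallyLipschitzOn isOpen_interior
    hf.locallyLipschitzOn_interior

lemma aestronglyMeasurable_restrict_of_concaveOn (hf : ConcaveOn ℝ s f) :
    AEStronglyMeasurable f (μ.restrict s) := by
  rw [← Measure.restrict_congr_set (interior_ae_eq_of_null_frontier (hf.1.addHaar_frontier μ))]
  exact hf.continuousOn_interior.aestronglyMeasurable isOpen_interior.measurableSet

end ConvexSet

section RealLine

variable {f : ℝ → ℝ} {a b : ℝ}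

lemma derivWithin_Ioi_nonneg_of_monotoneOn (hf : MonotoneOn f (Icc a b)) {x : ℝ}
    (hx : x ∈ Ioo a b) : 0 ≤ derivWithin f (Ioi x) x := by
  rw [← derivWithin_inter (Iio_mem_nhds hx.2), Ioi_inter_Iio]
  exact (hf.mono fun y hy => ⟨(hx.1.trans hy.1).le, hy.2.le⟩).derivWithin_nonneg

lemma lintegral_enorm_deriv_of_monotoneOn (hab : a ≤ b) (hcont : ContinuousOn f (Icc a b))
    (hmono : MonotoneOn f (Icc a b))
    (hright : ∀ x ∈ Ioo a b, DifferentiableWithinAt ℝ f (Ioi x) x)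
    (hdiff : ∀ᵐ x ∂volume.restrict (Icc a b), DifferentiableAt ℝ f x) :
    ∫⁻ x in Icc a b, ‖deriv f x‖ₑ = ENNReal.ofReal (f b - f a) := by
  -- The right derivative exists at every interior point, so the fundamental theorem of calculus
  -- applies without absolute continuity of `f`.
  set r : ℝ → ℝ := fun x => derivWithin f (Ioi x) x
  have hr : ∀ x ∈ Ioo a b, HasDerivWithinAt f (r x) (Ioi x) x :=
    fun x hx => (hright x hx).hasDerivWithinAt
  have hr_nonneg : ∀ x ∈ Ioo a b, 0 ≤ r x := fun x => derivWithin_Ioi_nonneg_of_monotoneOn hmono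
  have hr_int : IntegrableOn r (Ioc a b) :=
    intervalIntegral.integrableOn_deriv_right_of_nonneg hcont hr hr_nonneg
  have hderiv : ∀ᵐ x ∂volume.restrict (Ioo a b), ‖deriv f x‖ₑ = ENNReal.ofReal (r x) := by
    filter_upwards [ae_restrict_of_ae_restrict_of_subset Ioo_subset_Icc_self hdiff,
      ae_restrict_mem measurableSet_Ioo] with x hx hxI
    rw [← hx.derivWithin (uniqueDiffWithinAt_Ioi x), Real.enorm_of_nonneg (hr_nonneg x hxI)]
  rw [← intervalIntegral.integral_eq_sub_of_hasDeriv_right_of_le hab hcont hr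
      ((intervalIntegrable_iff_integrableOn_Ioc_of_le hab).2 hr_int),
    intervalIntegral.integral_of_le hab, integral_Ioc_eq_integral_Ioo,
    ofReal_integral_eq_lintegral_ofReal (hr_int.mono_set Ioo_subset_Ioc_self)
      ((ae_restrict_mem measurableSet_Ioo).mono hr_nonneg),
    ← setLIntegral_congr Ioo_ae_eq_Icc]
  exact lintegral_congr_ae hderiv

lemma monotoneOn_of_concaveOn_of_isMaxOn (hf : ConcaveOn ℝ (Icc a b) f) (hab : a ≤ b)
    (hmax : IsMaxOn f (Icc a b) b) : MonotoneOn f (Icc a b) := by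
  intro x hx y hy hxy
  have h := hf.min_le_of_mem_Icc hx (right_mem_Icc.2 hab) ⟨hxy, hy.2⟩
  rwa [min_eq_left (hmax hx)] at h

lemma antitoneOn_of_concaveOn_of_isMaxOn (hf : ConcaveOn ℝ (Icc a b) f) (hab : a ≤ b)
    (hmax : IsMaxOn f (Icc a b) a) : AntitoneOn f (Icc a b) := by
  intro x hx y hy hxy
  have h := hf.min_le_of_mem_Icc (left_mem_Icc.2 hab) hy ⟨hx.1, hxy⟩
  rwa [min_eq_right (hmax hy)] at h

lemma lintegral_enorm_deriv_of_concaveOn (hab : a ≤ b) (hf : ConcaveOn ℝ (Icc a b) f)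
    (hcont : ContinuousOn f (Icc a b)) {m : ℝ} (hm : m ∈ Icc a b)
    (hmax : IsMaxOn f (Icc a b) m) :
    ∫⁻ x in Icc a b, ‖deriv f x‖ₑ = ENNReal.ofReal (2 * f m - f a - f b) := by
  have hright : ∀ x ∈ Ioo a b, DifferentiableWithinAt ℝ f (Ioi x) x := fun x hx => by
    simpa using (hf.neg.differentiableWithinAt_Ioi_of_mem_interior (by rwa [interior_Icc])).neg
  have hdiff : ∀ᵐ x ∂volume.restrict (Icc a b), DifferentiableAt ℝ f x :=
    ae_restrict_differentiableAt_of_concaveOn hf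
  have hleft_sub : Icc a m ⊆ Icc a b := Icc_subset_Icc_right hm.2
  have hright_sub : Icc m b ⊆ Icc a b := Icc_subset_Icc_left hm.1
  have hmono : MonotoneOn f (Icc a m) := monotoneOn_of_concaveOn_of_isMaxOn
    (hf.subset hleft_sub (convex_Icc a m)) hm.1 (hmax.on_subset hleft_sub)
  have hanti : AntitoneOn f (Icc m b) := antitoneOn_of_concaveOn_of_isMaxOn
    (hf.subset hright_sub (convex_Icc m b)) hm.2 (hmax.on_subset hright_sub)
  have hrise := lintegral_enorm_deriv_of_monotoneOn hm.1 (hcont.mono hleft_sub) hmono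
    (fun x hx => hright x ⟨hx.1, hx.2.trans_le hm.2⟩)
    (ae_restrict_of_ae_restrict_of_subset hleft_sub hdiff)
  have hfall := lintegral_enorm_deriv_of_monotoneOn hm.2 (hcont.neg.mono hright_sub) hanti.neg
    (fun x hx => (hright x ⟨hm.1.trans_lt hx.1, hx.2⟩).neg)
    ((ae_restrict_of_ae_restrict_of_subset hright_sub hdiff).mono fun x hx => hx.neg)
  simp only [deriv.neg, enorm_neg] at hfall
  rw [← Icc_union_Ioc_eq_Icc hm.1 hm.2,
    lintegral_union measurableSet_Ioc (disjoint_left.2 fun x hx hx' => hx'.1.not_ge hx.2),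
    setLIntegral_congr Ioc_ae_eq_Icc, hrise, hfall, ← ENNReal.ofReal_add]
  · congr 1
    simp only [Pi.neg_apply]
    ring
  · exact sub_nonneg.2 (hmax (left_mem_Icc.2 hab))
  · simpa using hmax (right_mem_Icc.2 hab)

lemma add_le_add_reflect_of_concaveOn (hf : ConcaveOn ℝ (Icc a b) f) {x : ℝ}
    (hx : x ∈ Icc a b) : f a + f b ≤ f x + f (a + b - x) := by
  have hab : a ≤ b := hx.1.trans hx.2
  have ha := left_mem_Icc.2 hab
  have hb := right_mem_Icc.2 hab
  rw [← segment_eq_Icc hab] at hx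
  obtain ⟨s, t, hs, ht, hst, rfl⟩ := hx
  have hx := hf.2 ha hb hs ht hst
  have hx' := hf.2 ha hb ht hs (by rwa [add_comm])
  have hreflect : a + b - (s • a + t • b) = t • a + s • b := by
    obtain rfl : t = 1 - s := by linarith
    simp only [smul_eq_mul]
    ring
  rw [hreflect]
  calc f a + f b = (s + t) * (f a + f b) := by rw [hst, one_mul]
    _ = (s • f a + t • f b) + (t • f a + s • f b) := by simp only [smul_eq_mul]; ring
    _ ≤ _ := add_le_add hx hx'

lemma trapezoid_le_integral_of_concaveOn (hab : a ≤ b) (hf : ConcaveOn ℝ (Icc a b) f)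
    (hint : IntervalIntegrable f volume a b) :
    (b - a) * ((f a + f b) / 2) ≤ ∫ x in a..b, f x := by
  have hint' : IntervalIntegrable (fun x => f (a + b - x)) volume a b := by
    simpa using (hint.comp_sub_left (a + b)).symm
  have hsymm : ∫ x in a..b, f (a + b - x) = ∫ x in a..b, f x := by simp
  have h := intervalIntegral.integral_mono_on hab intervalIntegrable_const (hint.add hint')
    fun x hx => add_le_add_reflect_of_concaveOn hf hx
  rw [intervalIntegral.integral_add hint hint', hsymm, intervalIntegral.integral_const,
    smul_eq_mul] at h
  linarith

lemma mul_div_two_le_setIntegral_of_concaveOn {K : Set ℝ} (hK : IsCompact K)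
    (hf : ConcaveOn ℝ K f) (hnonneg : ∀ x ∈ K, 0 ≤ f x) (hint : IntegrableOn f K) {z : ℝ}
    (hz : z ∈ K) : f z * volume.real K / 2 ≤ ∫ x in K, f x := by
  obtain ⟨a, b, rfl⟩ : ∃ a b, K = Icc a b :=
    ⟨_, _, eq_Icc_of_connected_compact (hf.1.isConnected ⟨z, hz⟩) hK⟩
  have hab : a ≤ b := hz.1.trans hz.2
  have hl : Icc a z ⊆ Icc a b := Icc_subset_Icc_right hz.2
  have hr : Icc z b ⊆ Icc a b := Icc_subset_Icc_left hz.1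
  have hil := (intervalIntegrable_iff_integrableOn_Icc_of_le hz.1).2 (hint.mono_set hl)
  have hir := (intervalIntegrable_iff_integrableOn_Icc_of_le hz.2).2 (hint.mono_set hr)
  have hleft := trapezoid_le_integral_of_concaveOn hz.1 (hf.subset hl (convex_Icc a z)) hil
  have hright := trapezoid_le_integral_of_concaveOn hz.2 (hf.subset hr (convex_Icc z b)) hir
  rw [integral_Icc_eq_integral_Ioc, ← intervalIntegral.integral_of_le hab,
    ← intervalIntegral.integral_add_adjacent_intervals hil hir, Real.volume_real_Icc_of_le hab]
  have hfa := mul_nonneg (sub_nonneg.2 hz.1) (hnonneg a (left_mem_Icc.2 hab))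
  have hfb := mul_nonneg (sub_nonneg.2 hz.2) (hnonneg b (right_mem_Icc.2 hab))
  linarith

end RealLine

/-- `DirichletConcaveOn Ω u` says that `u` is a continuous concave function on `Ω` with zero
boundary values. This is the class `𝒰_Ω` freed from the bound on the gradient, which makes it stable
under restriction to lines. -/
structure DirichletConcaveOn {E : Type*} [TopologicalSpace E] [AddCommMonoid E] [SMul ℝ E]
    (Ω : Set E) (u : E → ℝ) : Prop where
  continuousOn : ContinuousOn u Ω
  concaveOn : ConcaveOn ℝ Ω u
  eq_zero_of_mem_frontier : ∀ z ∈ frontier Ω, u z = 0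

lemma MemU.dirichletConcaveOn {Ω : Set (ℝ × ℝ)} {u : ℝ × ℝ → ℝ} (hu : MemU Ω u) :
    DirichletConcaveOn Ω u :=
  ⟨hu.1, hu.2.1, hu.2.2.1⟩

/-- The largest value of `u` on the fibre of `Ω ⊆ F × ℝ` over `y`; it is `0` when the fibre is
empty. -/
noncomputable def fiberSup {F : Type*} (Ω : Set (F × ℝ)) (u : F × ℝ → ℝ) (y : F) : ℝ :=
  sSup ((fun t => u (y, t)) '' (Prod.mk y ⁻¹' Ω))

lemma isCompact_fiber {F G : Type*} [TopologicalSpace F] [T2Space F] [TopologicalSpace G]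
    [T2Space G] {Ω : Set (F × G)} (hΩ : IsCompact Ω) (y : F) : IsCompact (Prod.mk y ⁻¹' Ω) :=
  (hΩ.image continuous_snd).of_isClosed_subset (hΩ.isClosed.preimage (by fun_prop))
    fun t ht => ⟨(y, t), ht, rfl⟩

lemma fiberSup_eq_zero_of_notMem_image_fst {F : Type*} {Ω : Set (F × ℝ)} {y : F}
    (hy : y ∉ Prod.fst '' Ω) (u : F × ℝ → ℝ) : fiberSup Ω u y = 0 := by
  have hempty : Prod.mk y ⁻¹' Ω = ∅ := eq_empty_of_forall_notMem fun t ht => hy ⟨(y, t), ht, rfl⟩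
  rw [fiberSup, hempty, image_empty, Real.sSup_empty]

lemma L1N_nonneg (Ω : Set (ℝ × ℝ)) (f : ℝ × ℝ → ℝ) : 0 ≤ L1N Ω f :=
  integral_nonneg fun _ => abs_nonneg _

lemma uy_comp_swap (u : ℝ × ℝ → ℝ) (z : ℝ × ℝ) : uy (u ∘ Prod.swap) z = ux u z.swap :=
  congrArg (fun L : ℝ × ℝ →L[ℝ] ℝ => L (0, 1))
    ((ContinuousLinearEquiv.prodComm ℝ ℝ ℝ).comp_right_fderiv (f := u) (x := z))

lemma L1N_uy_comp_swap (Ω : Set (ℝ × ℝ)) (u : ℝ × ℝ → ℝ) :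
    L1N (Prod.swap ⁻¹' Ω) (uy (u ∘ Prod.swap)) = L1N Ω (ux u) := by
  simp only [L1N, uy_comp_swap]
  exact (Measure.measurePreserving_swap (μ := (volume : Measure ℝ))
    (ν := (volume : Measure ℝ))).setIntegral_preimage_emb
    (MeasurableEquiv.prodComm (α := ℝ) (β := ℝ)).measurableEmbedding (fun z => |ux u z|) Ω

namespace DirichletConcaveOn

lemma comp_continuousAffineMap {E E' : Type*} [NormedAddCommGroup E] [NormedSpace ℝ E]
    [NormedAddCommGroup E'] [NormedSpace ℝ E'] {Ω : Set E} {u : E → ℝ}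
    (hu : DirichletConcaveOn Ω u) (g : E' →ᴬ[ℝ] E) : DirichletConcaveOn (g ⁻¹' Ω) (u ∘ g) where
  continuousOn := hu.continuousOn.comp g.continuous.continuousOn (mapsTo_preimage g Ω)
  concaveOn := hu.concaveOn.comp_affineMap g.toAffineMap
  eq_zero_of_mem_frontier _ hz :=
    hu.eq_zero_of_mem_frontier _ (g.continuous.frontier_preimage_subset Ω hz)

section Real

variable {S : Set ℝ} {f : ℝ → ℝ}

lemma exists_eq_Icc (hf : DirichletConcaveOn S f) (hS : IsCompact S) (hne : S.Nonempty) :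
    ∃ a b, a ≤ b ∧ S = Icc a b ∧ f a = 0 ∧ f b = 0 := by
  obtain ⟨a, b, rfl⟩ : ∃ a b, S = Icc a b :=
    ⟨_, _, eq_Icc_of_connected_compact (hf.concaveOn.1.isConnected hne) hS⟩
  have hab : a ≤ b := nonempty_Icc.1 hne
  have hzero : ∀ x ∈ ({a, b} : Set ℝ), f x = 0 := by
    rw [← frontier_Icc hab]
    exact hf.eq_zero_of_mem_frontier
  exact ⟨a, b, hab, rfl, hzero a (by simp), hzero b (by simp)⟩

lemma nonneg_of_real (hf : DirichletConcaveOn S f) (hS : IsCompact S) {x : ℝ} (hx : x ∈ S) :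
    0 ≤ f x := by
  obtain ⟨a, b, hab, rfl, ha, hb⟩ := hf.exists_eq_Icc hS ⟨x, hx⟩
  simpa [ha, hb] using
    hf.concaveOn.min_le_of_mem_Icc (left_mem_Icc.2 hab) (right_mem_Icc.2 hab) hx

lemma lintegral_enorm_deriv_eq (hf : DirichletConcaveOn S f) (hS : IsCompact S) :
    ∫⁻ x in S, ‖deriv f x‖ₑ = ENNReal.ofReal (2 * sSup (f '' S)) := by
  rcases S.eq_empty_or_nonempty with rfl | hne
  · simp
  obtain ⟨m, hm, hsup, hmax⟩ := hS.exists_sSup_image_eq_and_ge hne hf.continuousOn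
  obtain ⟨a, b, hab, rfl, ha, hb⟩ := hf.exists_eq_Icc hS hne
  rw [lintegral_enorm_deriv_of_concaveOn hab hf.concaveOn hf.continuousOn hm hmax, ha, hb, hsup,
    sub_zero, sub_zero]

end Real

section Fiber

variable {F : Type*} [NormedAddCommGroup F] [NormedSpace ℝ F] {Ω : Set (F × ℝ)} {u : F × ℝ → ℝ}

lemma fiber (hu : DirichletConcaveOn Ω u) (y : F) :
    DirichletConcaveOn (Prod.mk y ⁻¹' Ω) (fun t => u (y, t)) :=
  hu.comp_continuousAffineMap ((ContinuousAffineMap.const ℝ ℝ y).prod (ContinuousAffineMap.id ℝ ℝ))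

lemma nonneg (hu : DirichletConcaveOn Ω u) (hΩ : IsCompact Ω) {z : F × ℝ} (hz : z ∈ Ω) :
    0 ≤ u z :=
  (hu.fiber z.1).nonneg_of_real (isCompact_fiber hΩ z.1) hz

lemma sSup_image_nonneg (hu : DirichletConcaveOn Ω u) (hΩ : IsCompact Ω) :
    0 ≤ sSup (u '' Ω) :=
  Real.sSup_nonneg (forall_mem_image.2 fun _ hz => hu.nonneg hΩ hz)

lemma exists_fiberSup_eq (hu : DirichletConcaveOn Ω u) (hΩ : IsCompact Ω) {y : F}
    (hy : y ∈ Prod.fst '' Ω) : ∃ t, (y, t) ∈ Ω ∧ fiberSup Ω u y = u (y, t) := by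
  obtain ⟨⟨_, t⟩, ht, rfl⟩ := hy
  exact (isCompact_fiber hΩ _).exists_sSup_image_eq ⟨t, ht⟩ (hu.fiber _).continuousOn

lemma le_fiberSup (hu : DirichletConcaveOn Ω u) (hΩ : IsCompact Ω) {z : F × ℝ} (hz : z ∈ Ω) :
    u z ≤ fiberSup Ω u z.1 :=
  le_csSup ((isCompact_fiber hΩ z.1).bddAbove_image (hu.fiber z.1).continuousOn) ⟨z.2, hz, rfl⟩

lemma fiberSup_nonneg (hu : DirichletConcaveOn Ω u) (hΩ : IsCompact Ω) (y : F) :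
    0 ≤ fiberSup Ω u y :=
  Real.sSup_nonneg (forall_mem_image.2 fun _ ht => hu.nonneg hΩ ht)

lemma fiberSup_le_sSup (hu : DirichletConcaveOn Ω u) (hΩ : IsCompact Ω) {y : F}
    (hy : y ∈ Prod.fst '' Ω) : fiberSup Ω u y ≤ sSup (u '' Ω) := by
  obtain ⟨t, ht, hsup⟩ := hu.exists_fiberSup_eq hΩ hy
  exact hsup ▸ le_csSup (hΩ.bddAbove_image hu.continuousOn) ⟨_, ht, rfl⟩

lemma concaveOn_fiberSup (hu : DirichletConcaveOn Ω u) (hΩ : IsCompact Ω) :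
    ConcaveOn ℝ (Prod.fst '' Ω) (fiberSup Ω u) := by
  refine ⟨hu.concaveOn.1.linear_image (LinearMap.fst ℝ F ℝ), ?_⟩
  intro y hy y' hy' a b ha hb hab
  obtain ⟨t, ht, hsup⟩ := hu.exists_fiberSup_eq hΩ hy
  obtain ⟨t', ht', hsup'⟩ := hu.exists_fiberSup_eq hΩ hy'
  rw [hsup, hsup']
  exact (hu.concaveOn.2 ht ht' ha hb hab).trans
    (hu.le_fiberSup hΩ (hu.concaveOn.1 ht ht' ha hb hab))

lemma lintegral_enorm_fderiv_fiber_eq (hu : DirichletConcaveOn Ω u) (hΩ : IsCompact Ω) {y : F}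
    (hdiff : ∀ᵐ t, (y, t) ∈ Ω → DifferentiableAt ℝ u (y, t)) :
    ∫⁻ t in Prod.mk y ⁻¹' Ω, ‖fderiv ℝ u (y, t) (0, 1)‖ₑ =
      ENNReal.ofReal (2 * fiberSup Ω u y) := by
  rw [fiberSup, ← (hu.fiber y).lintegral_enorm_deriv_eq (isCompact_fiber hΩ y)]
  refine setLIntegral_congr_fun_ae (isCompact_fiber hΩ y).measurableSet ?_
  filter_upwards [hdiff] with t ht htΩ
  have hline : HasDerivAt (fun s => (y, s)) (0, 1) t :=
    (hasDerivAt_const t y).prodMk (hasDerivAt_id t)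
  have hderiv : HasDerivAt (fun s => u (y, s)) (fderiv ℝ u (y, t) (0, 1)) t :=
    (ht htΩ).hasFDerivAt.comp_hasDerivAt t hline
  rw [hderiv.deriv]

variable [FiniteDimensional ℝ F] [MeasurableSpace F] [BorelSpace F] {μ : Measure F}
  [μ.IsAddHaarMeasure]

lemma lintegral_enorm_fderiv_eq (hu : DirichletConcaveOn Ω u) (hΩ : IsCompact Ω) :
    ∫⁻ z in Ω, ‖fderiv ℝ u z (0, 1)‖ₑ ∂μ.prod volume =
      ∫⁻ y in Prod.fst '' Ω, ENNReal.ofReal (2 * fiberSup Ω u y) ∂μ := by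
  have hmeas : Measurable fun z => ‖fderiv ℝ u z (0, 1)‖ₑ :=
    (measurable_fderiv_apply_const ℝ u (0, 1)).enorm
  have hdiff : ∀ᵐ y ∂μ, ∀ᵐ t, (y, t) ∈ Ω → DifferentiableAt ℝ u (y, t) :=
    Measure.ae_ae_of_ae_prod ((ae_restrict_iff' hΩ.measurableSet).1
      (ae_restrict_differentiableAt_of_concaveOn hu.concaveOn))
  have hsupport : Function.support (fun y => ENNReal.ofReal (2 * fiberSup Ω u y)) ⊆
      Prod.fst '' Ω := fun y hy => by
    by_contra hyΩ
    exact hy (by simp [fiberSup_eq_zero_of_notMem_image_fst hyΩ])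
  rw [← lintegral_indicator hΩ.measurableSet,
    lintegral_prod _ (hmeas.indicator hΩ.measurableSet).aemeasurable,
    setLIntegral_eq_of_support_subset hsupport]
  refine lintegral_congr_ae ?_
  filter_upwards [hdiff] with y hy
  rw [← hu.lintegral_enorm_fderiv_fiber_eq hΩ hy,
    ← lintegral_indicator (isCompact_fiber hΩ y).measurableSet]
  rfl

lemma integral_abs_fderiv_eq (hu : DirichletConcaveOn Ω u) (hΩ : IsCompact Ω) :
    ∫ z in Ω, |fderiv ℝ u z (0, 1)| ∂μ.prod volume =
      2 * ∫ y in Prod.fst '' Ω, fiberSup Ω u y ∂μ := by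
  have hmeas : AEStronglyMeasurable (fun y => 2 * fiberSup Ω u y) (μ.restrict (Prod.fst '' Ω)) :=
    (aestronglyMeasurable_restrict_of_concaveOn (hu.concaveOn_fiberSup hΩ)).const_mul 2
  rw [← integral_const_mul, integral_eq_lintegral_of_nonneg_ae
      (.of_forall fun y => mul_nonneg zero_le_two (hu.fiberSup_nonneg hΩ y)) hmeas,
    ← hu.lintegral_enorm_fderiv_eq hΩ]
  exact integral_norm_eq_lintegral_enorm
    (measurable_fderiv_apply_const ℝ u (0, 1)).aestronglyMeasurable

lemma integrableOn_fiberSup (hu : DirichletConcaveOn Ω u) (hΩ : IsCompact Ω) :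
    IntegrableOn (fiberSup Ω u) (Prod.fst '' Ω) μ := by
  have hK : IsCompact (Prod.fst '' Ω) := hΩ.image continuous_fst
  refine .of_bound hK.measure_lt_top
    (aestronglyMeasurable_restrict_of_concaveOn (hu.concaveOn_fiberSup hΩ)) (sSup (u '' Ω)) ?_
  filter_upwards [ae_restrict_mem hK.measurableSet] with y hy
  rw [Real.norm_of_nonneg (hu.fiberSup_nonneg hΩ y)]
  exact hu.fiberSup_le_sSup hΩ hy

lemma integral_fiberSup_le (hu : DirichletConcaveOn Ω u) (hΩ : IsCompact Ω) :
    ∫ y in Prod.fst '' Ω, fiberSup Ω u y ∂μ ≤ sSup (u '' Ω) * μ.real (Prod.fst '' Ω) := by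
  have hK : IsCompact (Prod.fst '' Ω) := hΩ.image continuous_fst
  calc ∫ y in Prod.fst '' Ω, fiberSup Ω u y ∂μ
      ≤ ∫ _ in Prod.fst '' Ω, sSup (u '' Ω) ∂μ :=
        setIntegral_mono_on (hu.integrableOn_fiberSup hΩ)
          (integrableOn_const hK.measure_lt_top.ne) hK.measurableSet
          fun _ => hu.fiberSup_le_sSup hΩ
    _ = sSup (u '' Ω) * μ.real (Prod.fst '' Ω) := by
        rw [setIntegral_const, smul_eq_mul, mul_comm]

end Fiber

section Plane

variable {Ω : Set (ℝ × ℝ)} {u v : ℝ × ℝ → ℝ}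

lemma le_integral_fiberSup (hu : DirichletConcaveOn Ω u) (hΩ : IsCompact Ω) :
    sSup (u '' Ω) * volume.real (Prod.fst '' Ω) / 2 ≤ ∫ y in Prod.fst '' Ω, fiberSup Ω u y := by
  rcases Ω.eq_empty_or_nonempty with rfl | hne
  · simp
  obtain ⟨z, hz, hsup⟩ := hΩ.exists_sSup_image_eq hne hu.continuousOn
  calc sSup (u '' Ω) * volume.real (Prod.fst '' Ω) / 2
      ≤ fiberSup Ω u z.1 * volume.real (Prod.fst '' Ω) / 2 := by
        rw [hsup]
        gcongr
        exact hu.le_fiberSup hΩ hz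
    _ ≤ ∫ y in Prod.fst '' Ω, fiberSup Ω u y :=
        mul_div_two_le_setIntegral_of_concaveOn (hΩ.image continuous_fst)
          (hu.concaveOn_fiberSup hΩ) (fun y _ => hu.fiberSup_nonneg hΩ y)
          (hu.integrableOn_fiberSup hΩ) ⟨z, hz, rfl⟩

lemma L1N_uy_mem_Icc (hu : DirichletConcaveOn Ω u) (hΩ : IsCompact Ω) :
    L1N Ω (uy u) ∈ Icc (sSup (u '' Ω) * volume.real (Prod.fst '' Ω))
      (2 * (sSup (u '' Ω) * volume.real (Prod.fst '' Ω))) := by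
  have heq : L1N Ω (uy u) = 2 * ∫ y in Prod.fst '' Ω, fiberSup Ω u y :=
    hu.integral_abs_fderiv_eq hΩ
  have hlower := hu.le_integral_fiberSup hΩ
  have hupper := hu.integral_fiberSup_le hΩ (μ := volume)
  constructor <;> linarith

lemma comp_swap (hu : DirichletConcaveOn Ω u) :
    DirichletConcaveOn (Prod.swap ⁻¹' Ω) (u ∘ Prod.swap) :=
  hu.comp_continuousAffineMap
    (ContinuousLinearEquiv.prodComm ℝ ℝ ℝ : ℝ × ℝ →L[ℝ] ℝ × ℝ).toContinuousAffineMap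

lemma L1N_ux_mem_Icc (hu : DirichletConcaveOn Ω u) (hΩ : IsCompact Ω) :
    L1N Ω (ux u) ∈ Icc (sSup (u '' Ω) * volume.real (Prod.snd '' Ω))
      (2 * (sSup (u '' Ω) * volume.real (Prod.snd '' Ω))) := by
  have hΩ' : IsCompact (Prod.swap ⁻¹' Ω) := (Homeomorph.prodComm ℝ ℝ).isCompact_preimage.2 hΩ
  have h := hu.comp_swap.L1N_uy_mem_Icc hΩ'
  rwa [L1N_uy_comp_swap, image_comp, image_preimage_eq _ Prod.swap_surjective,
    ← image_swap_eq_preimage_swap, image_image] at h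

theorem L1N_ux_mul_L1N_uy_le (hu : DirichletConcaveOn Ω u) (hv : DirichletConcaveOn Ω v)
    (hΩ : IsCompact Ω) :
    L1N Ω (ux u) * L1N Ω (uy v) ≤ 4 * (L1N Ω (uy u) * L1N Ω (ux v)) := by
  obtain ⟨-, hux⟩ := hu.L1N_ux_mem_Icc hΩ
  obtain ⟨huy, -⟩ := hu.L1N_uy_mem_Icc hΩ
  obtain ⟨hvx, -⟩ := hv.L1N_ux_mem_Icc hΩ
  obtain ⟨-, hvy⟩ := hv.L1N_uy_mem_Icc hΩ
  set w := volume.real (Prod.fst '' Ω)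
  set h := volume.real (Prod.snd '' Ω)
  have hlower_nonneg : 0 ≤ sSup (v '' Ω) * h :=
    mul_nonneg (hv.sSup_image_nonneg hΩ) measureReal_nonneg
  calc L1N Ω (ux u) * L1N Ω (uy v)
      ≤ (2 * (sSup (u '' Ω) * h)) * (2 * (sSup (v '' Ω) * w)) :=
        mul_le_mul hux hvy (L1N_nonneg Ω _) ((L1N_nonneg Ω _).trans hux)
    _ = 4 * ((sSup (u '' Ω) * w) * (sSup (v '' Ω) * h)) := by ring
    _ ≤ 4 * (L1N Ω (uy u) * L1N Ω (ux v)) :=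
        mul_le_mul_of_nonneg_left (mul_le_mul huy hvx hlower_nonneg (L1N_nonneg Ω _)) four_pos.le

lemma L1N_uy_pos (hu : DirichletConcaveOn Ω u) (hΩ : IsCompact Ω) (hne : ∃ z ∈ Ω, u z ≠ 0) :
    0 < L1N Ω (uy u) := by
  obtain ⟨z, hz, hne⟩ := hne
  have hzint : z ∈ interior Ω := by
    by_contra h
    exact hne (hu.eq_zero_of_mem_frontier z ⟨subset_closure hz, h⟩)
  have hsup : 0 < sSup (u '' Ω) := ((hu.nonneg hΩ hz).lt_of_ne' hne).trans_le
    (le_csSup (hΩ.bddAbove_image hu.continuousOn) ⟨z, hz, rfl⟩)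
  have hwidth : 0 < volume (Prod.fst '' Ω) := Measure.measure_pos_of_nonempty_interior _
    ⟨z.1, isOpenMap_fst.image_interior_subset Ω ⟨z, hzint, rfl⟩⟩
  exact (mul_pos hsup (ENNReal.toReal_pos hwidth.ne'
    (hΩ.image continuous_fst).measure_lt_top.ne)).trans_le (hu.L1N_uy_mem_Icc hΩ).1

end Plane

end DirichletConcaveOn

lemma sSup_le_mul_sInf_of_forall_le_mul {S : Set ℝ} {c : ℝ} (hc : 0 < c)
    (h : ∀ r ∈ S, ∀ s ∈ S, r ≤ c * s) : sSup S ≤ c * sInf S := by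
  rcases S.eq_empty_or_nonempty with rfl | hne
  · simp
  rw [← div_le_iff₀' hc]
  refine le_csInf hne fun s hs => (div_le_iff₀' hc).2 (csSup_le hne fun r hr => h r hr s hs)

theorem stmt_6_general {Ω : Set (ℝ × ℝ)} (hΩ : IsCompact Ω) {u v : ℝ × ℝ → ℝ}
    (hu : DirichletConcaveOn Ω u) (hv : DirichletConcaveOn Ω v) :
    L1N Ω (ux u) * L1N Ω (uy v) ≤ 4 * (L1N Ω (uy u) * L1N Ω (ux v)) ∧
      ((∃ z ∈ Ω, u z ≠ 0) → (∃ z ∈ Ω, v z ≠ 0) →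
        L1N Ω (ux u) / L1N Ω (uy u) ≤ 4 * (L1N Ω (ux v) / L1N Ω (uy v))) := by
  refine ⟨hu.L1N_ux_mul_L1N_uy_le hv hΩ, fun hune hvne => ?_⟩
  rw [← mul_div_assoc, div_le_div_iff₀ (hu.L1N_uy_pos hΩ hune) (hv.L1N_uy_pos hΩ hvne)]
  linarith [hu.L1N_ux_mul_L1N_uy_le hv hΩ]

/-- for all `u, v ∈ 𝒰_Ω`, `‖u_x‖₁ ‖v_y‖₁ ≤ 4 ‖u_y‖₁ ‖v_x‖₁`; in particular
the ratio of the supremum to the infimum of `‖u_x‖₁/‖u_y‖₁` over nonzero `u` is at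
most `4`. -/
theorem stmt_6 (Ω : Set (ℝ × ℝ)) (hΩc : IsCompact Ω) (hΩconv : Convex ℝ Ω)
    (hΩint : (interior Ω).Nonempty) :
    (∀ u v : ℝ × ℝ → ℝ, MemU Ω u → MemU Ω v →
      L1N Ω (ux u) * L1N Ω (uy v) ≤ 4 * (L1N Ω (uy u) * L1N Ω (ux v))) ∧
    sSup {r : ℝ | ∃ u : ℝ × ℝ → ℝ, MemU Ω u ∧ (∃ z ∈ Ω, u z ≠ 0) ∧
        r = L1N Ω (ux u) / L1N Ω (uy u)} ≤
      4 * sInf {r : ℝ | ∃ u : ℝ × ℝ → ℝ, MemU Ω u ∧ (∃ z ∈ Ω, u z ≠ 0) ∧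
        r = L1N Ω (ux u) / L1N Ω (uy u)} := by
  refine ⟨fun u v hu hv => (stmt_6_general hΩc hu.dirichletConcaveOn hv.dirichletConcaveOn).1,
    sSup_le_mul_sInf_of_forall_le_mul four_pos ?_⟩
  rintro _ ⟨u, hu, hune, rfl⟩ _ ⟨v, hv, hvne, rfl⟩
  exact (stmt_6_general hΩc hu.dirichletConcaveOn hv.dirichletConcaveOn).2 hune hvne
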